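/- For every n ≥ 1, the number of Latin squares of order n satisfies the lower bound L(n) ≥ (n!)^{2n} / n^{n²}. -/

import Mathlib

/-- The number of Latin squares of order `n`: functions `L : {1,…,n}² → {1,…,n}`
whose every row and every column is a bijection. -/
noncomputable def latinSquareCount (n : ℕ) : ℕ :=
  Nat.card {L : Fin n → Fin n → Fin n //
    (∀ i, Function.Bijective (L i)) ∧ (∀ j, Function.Bijective fun i => L i j)}

open Finset

lemma lin_key {κ : Type*} [Fintype κ] [DecidableEq κ] (M : κ → κ → ℝ) (r : κ → ℝ)
    (hsymm : ∀ i j, M i j = M j i) (hpos : ∀ i j, i ≠ j → 0 < M i j) (hdiag : ∀ i, 0 ≤ M i i)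
    (hr : ∀ i, ∑ j, M i j = r i) (hrpos : ∀ i, 0 < r i)
    (h : ∀ u : κ → ℝ, ∑ i, u i * ∑ j, M i j * u j ≤ ∑ i, (∑ j, M i j * u j) ^ 2 / r i)
    (u : κ → ℝ) (hu : ∑ i, u i * r i = 0) : ∑ i, u i * ∑ j, M i j * u j ≤ 0 := by
  classical
  set s : κ → ℝ := fun i => √(r i) with hs
  have hspos : ∀ i, 0 < s i := fun i => Real.sqrt_pos.2 (hrpos i)
  have hss : ∀ i, s i * s i = r i := fun i => Real.mul_self_sqrt (hrpos i).le
  have hnn : ∀ i j, 0 ≤ M i j := fun i j => by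
    by_cases hij : i = j
    · subst hij; exact hdiag i
    · exact (hpos i j hij).le
  let N : Matrix κ κ ℝ := Matrix.of fun i j => M i j / (s i * s j)
  have hN : N.IsHermitian := by
    ext i j
    simp [N, hsymm i j, mul_comm]
  let b := hN.eigenvectorBasis
  let lam := hN.eigenvalues
  have hb : ∀ k i, ∑ j, M i j * (b k j / s j) = lam k * (r i * (b k i / s i)) := by
    intro k i
    have := congrFun (hN.mulVec_eigenvectorBasis k) i
    simp only [Matrix.mulVec, dotProduct, N, Matrix.of_apply, Pi.smul_apply, smul_eq_mul] at this
    have e : ∑ j, M i j * (b k j / s j) = s i * ∑ j, M i j / (s i * s j) * b k j := by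
      rw [mul_sum]; refine sum_congr rfl fun j _ => ?_
      have := (hspos i).ne'; have := (hspos j).ne'
      field_simp
    rw [e]
    change s i * ∑ j, M i j / (s i * s j) * (hN.eigenvectorBasis k) j = _
    rw [this, ← hss]
    have := (hspos i).ne'
    field_simp
    rfl
  -- each eigenvalue is nonpositive or has a constant eigenvector
  have hk : ∀ k, lam k ≤ 0 ∨ ∀ i j, b k i / s i = b k j / s j := by
    intro k
    by_cases hl : lam k ≤ 0
    · exact Or.inl hl
    right
    push Not at hl
    set w : κ → ℝ := fun i => b k i / s i with hw
    have hbk : ∀ i, ∑ j, M i j * w j = lam k * (r i * w i) := hb k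
    have h1 : ∑ i, r i * w i ^ 2 = 1 := by
      have := b.orthonormal.1 k
      have h2 : ‖b k‖ ^ 2 = 1 := by rw [this]; norm_num
      rw [EuclideanSpace.norm_sq_eq] at h2
      rw [← h2]
      refine sum_congr rfl fun i _ => ?_
      have := (hspos i).ne'
      rw [← hss, hw, Real.norm_eq_abs, sq_abs]; field_simp
    have e1 : ∑ i, w i * ∑ j, M i j * w j = lam k := by
      simp_rw [hbk]
      calc _ = lam k * ∑ i, r i * w i ^ 2 := by rw [mul_sum]; exact sum_congr rfl fun i _ => by ring
        _ = _ := by rw [h1, mul_one]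
    have e2 : ∑ i, (∑ j, M i j * w j) ^ 2 / r i = lam k ^ 2 := by
      simp_rw [hbk]
      calc _ = lam k ^ 2 * ∑ i, r i * w i ^ 2 := by
            rw [mul_sum]; refine sum_congr rfl fun i _ => ?_
            have := (hrpos i).ne'
            field_simp
        _ = _ := by rw [h1, mul_one]
    have h3 := h w
    rw [e1, e2] at h3
    have h4 : 1 ≤ lam k := by nlinarith
    have e3 : ∑ i, ∑ j, M i j * (w i - w j) ^ 2 = 2 - 2 * lam k := by
      have a1 : ∑ i, ∑ j, M i j * w i ^ 2 = 1 := by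
        rw [← h1]; refine sum_congr rfl fun i _ => ?_
        rw [← sum_mul, hr]
      have a2 : ∑ i, ∑ j, M i j * w j ^ 2 = 1 := by
        rw [sum_comm, ← a1]
        exact sum_congr rfl fun i _ => sum_congr rfl fun j _ => by rw [hsymm]
      have a3 : ∑ i, ∑ j, M i j * (w i * w j) = lam k := by
        rw [← e1]; refine sum_congr rfl fun i _ => ?_
        rw [mul_sum]; exact sum_congr rfl fun j _ => by ring
      calc _ = ∑ i, ∑ j, M i j * w i ^ 2 + ∑ i, ∑ j, M i j * w j ^ 2
            - 2 * ∑ i, ∑ j, M i j * (w i * w j) := by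
              simp only [mul_sum, ← sum_add_distrib, ← sum_sub_distrib]
              exact sum_congr rfl fun i _ => sum_congr rfl fun j _ => by ring
        _ = _ := by rw [a1, a2, a3]; ring
    have nn : ∀ i j, 0 ≤ M i j * (w i - w j) ^ 2 := fun i j => mul_nonneg (hnn i j) (sq_nonneg _)
    have h5 : ∑ i, ∑ j, M i j * (w i - w j) ^ 2 = 0 :=
      le_antisymm (by rw [e3]; linarith) (sum_nonneg fun i _ => sum_nonneg fun j _ => nn i j)
    intro i j
    by_cases hij : i = j
    · rw [hij]
    have h6 := (sum_eq_zero_iff_of_nonneg (fun i _ => sum_nonneg fun j _ => nn i j)).1 h5 i (mem_univ _)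
    have h7 := (sum_eq_zero_iff_of_nonneg (fun j _ => nn i j)).1 h6 j (mem_univ _)
    rcases mul_eq_zero.1 h7 with h8 | h8
    · exact absurd h8 (hpos i j hij).ne'
    · exact sub_eq_zero.1 (pow_eq_zero_iff two_ne_zero |>.1 h8)
  -- spectral decomposition
  let x : EuclideanSpace ℝ κ := WithLp.toLp 2 fun i => s i * u i
  let y : EuclideanSpace ℝ κ := WithLp.toLp 2 fun i => (∑ j, M i j * u j) / s i
  have hxy : ∑ i, u i * ∑ j, M i j * u j = inner ℝ x y := by
    simp only [PiLp.inner_apply, x, y]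
    refine sum_congr rfl fun i _ => ?_
    have := (hspos i).ne'
    simp
    field_simp
  have hxb : ∀ k, inner ℝ x (b k) = ∑ i, (u i * r i) * (b k i / s i) := by
    intro k
    simp only [PiLp.inner_apply, x]
    refine sum_congr rfl fun i _ => ?_
    have := (hspos i).ne'
    simp only [← hss]
    simp
    field_simp
  have hyb : ∀ k, inner ℝ (b k) y = lam k * inner ℝ x (b k) := by
    intro k
    rw [hxb, mul_sum]
    have : inner ℝ (b k) y = ∑ i, ∑ j, (b k i / s i) * (M i j * u j) := by
      simp only [PiLp.inner_apply, y]
      refine sum_congr rfl fun i _ => ?_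
      rw [← mul_sum]
      simp
      ring
    rw [this, sum_comm]
    refine sum_congr rfl fun j _ => ?_
    calc _ = u j * ∑ i, M j i * (b k i / s i) := by
          rw [mul_sum]; exact sum_congr rfl fun i _ => by rw [hsymm]; ring
      _ = _ := by rw [hb]; ring
  rw [hxy, ← b.sum_inner_mul_inner x y]
  refine sum_nonpos fun k _ => ?_
  rw [hyb]
  rcases hk k with h1 | h1
  · nlinarith [mul_self_nonneg (inner ℝ x (b k))]
  · have : inner ℝ x (b k) = 0 := by
      rw [hxb]
      rcases isEmpty_or_nonempty κ with he | ⟨⟨i0⟩⟩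
      · simp
      · simp_rw [h1 _ i0]
        rw [← sum_mul, hu, zero_mul]
    rw [this]; simp

/-- Permanent of the list of columns `l` on the set of rows `S`. -/
noncomputable def colPer {ι : Type*} [DecidableEq ι] : List (ι → ℝ) → Finset ι → ℝ
  | [], _ => 1
  | a :: l, S => ∑ i ∈ S, a i * colPer l (S.erase i)

section
variable {ι : Type*} [DecidableEq ι]

lemma colPer_cons (a : ι → ℝ) (l : List (ι → ℝ)) (S : Finset ι) :
    colPer (a :: l) S = ∑ i ∈ S, a i * colPer l (S.erase i) := rfl

lemma colPer_swap (a b : ι → ℝ) (l : List (ι → ℝ)) (S : Finset ι) :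
    colPer (a :: b :: l) S = colPer (b :: a :: l) S := by
  simp only [colPer_cons, mul_sum]
  rw [sum_sigma', sum_sigma']
  refine sum_bij' (fun p _ => ⟨p.2, p.1⟩) (fun p _ => ⟨p.2, p.1⟩) ?_ ?_ ?_ ?_ ?_
  · rintro ⟨i, j⟩ h; simp at h ⊢; tauto
  · rintro ⟨i, j⟩ h; simp at h ⊢; tauto
  · rintro ⟨i, j⟩ h; rfl
  · rintro ⟨i, j⟩ h; rfl
  · rintro ⟨i, j⟩ h; simp only; rw [erase_right_comm]; ring

lemma colPer_perm {l l' : List (ι → ℝ)} (h : l.Perm l') : ∀ S, colPer l S = colPer l' S := by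
  induction h with
  | nil => intro S; rfl
  | cons a _ ih => intro S; simp only [colPer_cons, ih]
  | swap a b l => intro S; exact colPer_swap b a l S
  | trans _ _ ih1 ih2 => intro S; rw [ih1, ih2]

lemma colPer_pos (l : List (ι → ℝ)) : ∀ S : Finset ι, l.length = S.card →
    (∀ a ∈ l, ∀ i, 0 < a i) → 0 < colPer l S := by
  induction l with
  | nil => intro S _ _; simp [colPer]
  | cons a l ih =>
    intro S hS ha
    rw [colPer_cons]
    refine sum_pos (fun i hi => mul_pos (ha a (by simp) i) (ih _ ?_ fun b hb => ha b (by simp [hb]))) ?_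
    · rw [card_erase_of_mem hi, ← hS]; simp
    · rw [← card_pos, ← hS]; simp

lemma colPer_add_smul (a b : ι → ℝ) (t : ℝ) (l : List (ι → ℝ)) (S : Finset ι) :
    colPer ((fun i => a i + t * b i) :: l) S = colPer (a :: l) S + t * colPer (b :: l) S := by
  simp only [colPer_cons, mul_sum, ← sum_add_distrib]
  exact sum_congr rfl fun i _ => by ring

lemma colPer_add_smul2 (c a b : ι → ℝ) (t : ℝ) (l : List (ι → ℝ)) (S : Finset ι) :
    colPer (c :: (fun i => a i + t * b i) :: l) S
      = colPer (c :: a :: l) S + t * colPer (c :: b :: l) S := by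
  rw [colPer_swap, colPer_add_smul, colPer_swap a, colPer_swap b]

/-- Alexandrov's inequality for permanents. -/
theorem alexandrov (l : List (ι → ℝ)) : ∀ S : Finset ι, l.length + 2 = S.card →
    (∀ a ∈ l, ∀ i, 0 < a i) → ∀ x y : ι → ℝ, (∀ i, 0 < y i) →
    colPer (x :: x :: l) S * colPer (y :: y :: l) S ≤ colPer (x :: y :: l) S ^ 2 := by
  induction l with
  | nil =>
    intro S hS _ x y _
    obtain ⟨i, j, hij, rfl⟩ := card_eq_two.1 hS.symm
    have e1 : ({i, j} : Finset ι).erase i = {j} := by ext a; simp; grind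
    have e2 : ({i, j} : Finset ι).erase j = {i} := by ext a; simp; grind
    simp only [colPer, sum_pair hij, e1, e2, sum_singleton, mul_one]
    nlinarith [sq_nonneg (x i * y j - x j * y i)]
  | cons c l ih =>
    intro S hS hl x y hy
    have hc : ∀ i, 0 < c i := hl c (by simp)
    have hl' : ∀ a ∈ l, ∀ i, 0 < a i := fun a ha => hl a (by simp [ha])
    have hlen : ∀ i ∈ S, (S.erase i).card = l.length + 2 := fun i hi => by
      rw [card_erase_of_mem hi, ← hS]; simp
    have hccpos : ∀ i ∈ S, 0 < colPer (c :: c :: l) (S.erase i) := fun i hi =>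
      colPer_pos _ _ (by rw [hlen i hi]; simp) (by
        intro a ha; simp at ha; rcases ha with rfl | ha
        · exact hc
        · exact hl' a ha)
    -- negativity on the hyperplane orthogonal to `c`
    have key : ∀ w : ι → ℝ, colPer (w :: c :: c :: l) S = 0 → colPer (w :: w :: c :: l) S ≤ 0 := by
      let M : S → S → ℝ := fun i j => if i = j then 0 else
        c i * c j * colPer (c :: l) ((S.erase i).erase j)
      have hM : ∀ (w : ι → ℝ) (i : S), ∑ j, M i j * (w j / c j)
          = c i * colPer (w :: c :: l) (S.erase i) := by
        intro w i
        have : ∀ j : S, M i j * (w j / c j) = (fun j : ι => if (i : ι) = j then 0 else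
            c i * (w j * colPer (c :: l) ((S.erase i).erase j))) j := by
          intro j
          have := (hc j).ne'
          simp only [M, Subtype.ext_iff]
          split_ifs
          · simp
          · field_simp
        simp_rw [this]
        rw [sum_coe_sort S (fun j : ι => if (i : ι) = j then 0 else
            c i * (w j * colPer (c :: l) ((S.erase i).erase j))), colPer_cons, mul_sum,
            ← add_sum_erase S _ i.2]
        simp only [if_true, zero_add]
        refine sum_congr rfl fun j hj => ?_
        rw [if_neg]
        exact fun h => (mem_erase.1 hj).1 h.symm
      have hq : ∀ w : ι → ℝ, ∑ i : S, (w i / c i) * ∑ j, M i j * (w j / c j)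
          = colPer (w :: w :: c :: l) S := by
        intro w
        simp_rw [hM w]
        rw [colPer_cons, ← sum_coe_sort S]
        refine sum_congr rfl fun i _ => ?_
        have := (hc i).ne'
        field_simp
      have := lin_key M (fun i => c i * colPer (c :: c :: l) (S.erase i)) ?_ ?_ ?_ ?_ ?_ ?_
      · intro w hw
        rw [← hq w]
        refine this (fun i => w i / c i) ?_
        rw [← hw, colPer_cons, ← sum_coe_sort S]
        refine sum_congr rfl fun i _ => ?_
        have := (hc i).ne'
        field_simp
      · intro i j
        simp only [M, eq_comm (a := i) (b := j)]
        split_ifs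
        · rfl
        · rw [erase_right_comm]; ring
      · intro i j hij
        simp only [M, if_neg hij]
        refine mul_pos (mul_pos (hc _) (hc _)) (colPer_pos _ _ ?_ hl)
        rw [card_erase_of_mem, hlen i i.2]
        · simp
        · exact mem_erase.2 ⟨fun h => hij (Subtype.ext h.symm), j.2⟩
      · intro i; simp [M]
      · intro i
        rw [← hM c i]
        refine sum_congr rfl fun j _ => ?_
        rw [div_self (hc j).ne', mul_one]
      · intro i
        exact mul_pos (hc i) (hccpos i i.2)
      · intro u
        let w : ι → ℝ := fun i => if h : i ∈ S then c i * u ⟨i, h⟩ else 0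
        have hw : ∀ i : S, u i = w i / c i := by
          intro i
          have := (hc i).ne'
          simp only [w, i.2, dif_pos]
          field_simp
        simp_rw [hw]
        rw [hq w]
        simp_rw [hM w]
        rw [colPer_perm (l' := c :: w :: w :: l) (by
          refine List.Perm.trans (List.Perm.cons _ (List.Perm.swap _ _ _)) (List.Perm.swap _ _ _)),
          colPer_cons, ← sum_coe_sort S]
        refine sum_le_sum fun i _ => ?_
        have h1 := ih (S.erase i) (hlen i i.2).symm hl' w c hc
        have h2 := hccpos i i.2
        have h3 := hc i
        rw [le_div_iff₀ (mul_pos h3 h2)]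
        nlinarith [mul_le_mul_of_nonneg_left h1 (mul_pos h3 h3).le]
    have hyc : 0 < colPer (y :: c :: c :: l) S := colPer_pos _ _ (by simp [← hS]) (by
      intro a ha; simp at ha; rcases ha with rfl | rfl | ha
      · exact hy
      · exact hc
      · exact hl' a ha)
    have hyy : 0 < colPer (y :: y :: c :: l) S := colPer_pos _ _ (by simp [← hS]) (by
      intro a ha; simp at ha; rcases ha with rfl | rfl | ha
      · exact hy
      · exact hc
      · exact hl' a ha)
    obtain ⟨s, hs⟩ : ∃ s, colPer (x :: c :: c :: l) S + s * colPer (y :: c :: c :: l) S = 0 :=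
      ⟨- colPer (x :: c :: c :: l) S / colPer (y :: c :: c :: l) S, by field_simp; ring⟩
    have h1 := key (fun i => x i + s * y i) (by rw [colPer_add_smul, hs])
    rw [colPer_add_smul, colPer_add_smul2, colPer_add_smul2, colPer_swap y x] at h1
    set A := colPer (x :: x :: c :: l) S
    set B := colPer (x :: y :: c :: l) S
    set C := colPer (y :: y :: c :: l) S
    nlinarith [sq_nonneg (B + s * C), mul_le_mul_of_nonneg_left h1 hyy.le]
end

lemma logconcave_chain (g : ℕ → ℝ) (k : ℕ) (hpos : ∀ j ≤ k, 0 < g j)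
    (h : ∀ j, j + 2 ≤ k → g j * g (j + 2) ≤ g (j + 1) ^ 2) :
    g k ≤ g 0 * (g 1 / g 0) ^ k := by
  have h0 := hpos 0 (Nat.zero_le _)
  have h1 : ∀ j, j + 1 ≤ k → g (j + 1) * g 0 ≤ g j * g 1 := by
    intro j
    induction j with
    | zero => intro _; simp [mul_comm]
    | succ j ih =>
      intro hj
      have a := ih (by omega)
      have b := h j hj
      have p1 := hpos j (by omega)
      have p2 := hpos (j + 1) (by omega)
      refine le_of_mul_le_mul_left ?_ p1
      calc g j * (g (j + 1 + 1) * g 0) = (g j * g (j + 2)) * g 0 := by ring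
        _ ≤ g (j + 1) ^ 2 * g 0 := by gcongr
        _ = g (j + 1) * (g (j + 1) * g 0) := by ring
        _ ≤ g (j + 1) * (g j * g 1) := by gcongr
        _ = _ := by ring
  have h2 : ∀ j ≤ k, g j ≤ g 0 * (g 1 / g 0) ^ j := by
    intro j
    induction j with
    | zero => intro _; simp
    | succ j ih =>
      intro hj
      have a := ih (by omega)
      have b := h1 j hj
      have p1 := hpos 1 (by omega)
      calc g (j + 1) ≤ g j * (g 1 / g 0) := by
            rw [← mul_div_assoc, le_div_iff₀ h0]; exact b
        _ ≤ (g 0 * (g 1 / g 0) ^ j) * (g 1 / g 0) := by gcongr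
        _ = _ := by ring
  exact h2 k le_rfl

section
variable {ι : Type*} [DecidableEq ι]

lemma colPer_minkowski (k : ℕ) (rest : List (ι → ℝ)) (S : Finset ι)
    (hS : k + 1 + rest.length = S.card) (hrest : ∀ a ∈ rest, ∀ i, 0 < a i)
    (z a : ι → ℝ) (hz : ∀ i, 0 < z i) (ha : ∀ i, 0 < a i) (t : ℝ) (ht : 0 < t) :
    colPer (List.replicate (k + 1) (fun i => z i + t * a i) ++ rest) S ≤
      colPer (List.replicate (k + 1) z ++ rest) S *
      (1 + t * (colPer (List.replicate k z ++ a :: rest) S /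
        colPer (List.replicate (k + 1) z ++ rest) S)) ^ (k + 1) := by
  set y : ι → ℝ := fun i => z i + t * a i with hy
  have hypos : ∀ i, 0 < y i := fun i => add_pos (hz i) (mul_pos ht (ha i))
  let g : ℕ → ℝ := fun j => colPer (List.replicate j y ++ (List.replicate (k + 1 - j) z ++ rest)) S
  have hmem : ∀ p q, ∀ b ∈ List.replicate p y ++ (List.replicate q z ++ rest), ∀ i, 0 < b i := by
    intro p q b hb
    simp only [List.mem_append, List.mem_replicate] at hb
    rcases hb with ⟨_, rfl⟩ | ⟨_, rfl⟩ | hb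
    · exact hypos
    · exact hz
    · exact hrest b hb
  have hpos : ∀ j ≤ k + 1, 0 < g j := fun j hj =>
    colPer_pos _ _ (by simp; omega) (hmem _ _)
  have hlc : ∀ j, j + 2 ≤ k + 1 → g j * g (j + 2) ≤ g (j + 1) ^ 2 := by
    intro j hj
    obtain ⟨m, hm⟩ : ∃ m, k + 1 = j + 2 + m := ⟨k + 1 - (j + 2), by omega⟩
    have := alexandrov (List.replicate j y ++ (List.replicate m z ++ rest)) S
      (by simp; omega) (hmem _ _) z y hypos
    have e0 : g j = colPer (z :: z :: (List.replicate j y ++ (List.replicate m z ++ rest))) S := by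
      simp only [g]
      rw [show k + 1 - j = m + 1 + 1 by omega]
      simp only [List.replicate_succ, List.cons_append]
      refine colPer_perm ?_ S
      exact List.perm_middle.trans (List.Perm.cons _ List.perm_middle)
    have e1 : g (j + 1) = colPer (z :: y :: (List.replicate j y ++ (List.replicate m z ++ rest))) S := by
      simp only [g]
      rw [show k + 1 - (j + 1) = m + 1 by omega]
      simp only [List.replicate_succ, List.cons_append]
      refine colPer_perm ?_ S
      exact (List.Perm.cons _ List.perm_middle).trans (List.Perm.swap _ _ _)
    have e2 : g (j + 2) = colPer (y :: y :: (List.replicate j y ++ (List.replicate m z ++ rest))) S := by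
      simp only [g]
      rw [show k + 1 - (j + 2) = m by omega]
      simp only [List.replicate_succ, List.cons_append]
    rw [e0, e1, e2]
    exact this
  have := logconcave_chain g (k + 1) hpos hlc
  have g0 : g 0 = colPer (List.replicate (k + 1) z ++ rest) S := by simp [g]
  have g1 : g 1 = g 0 + t * colPer (List.replicate k z ++ a :: rest) S := by
    rw [g0]
    simp only [g, hy]
    simp only [List.replicate_succ, List.cons_append, Nat.add_sub_cancel, List.replicate_zero,
      List.nil_append]
    rw [colPer_add_smul]
    congr 2
    exact colPer_perm List.perm_middle.symm S
  have gk : g (k + 1) = colPer (List.replicate (k + 1) y ++ rest) S := by simp [g]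
  have h0 := hpos 0 (Nat.zero_le _)
  rw [gk, g1] at this
  rw [← g0]
  convert this using 3
  field_simp

/-- Gurvits' capacity induction. -/
lemma capacity_ind (a : ℕ → ι → ℝ) (ha : ∀ j i, 0 < a j i) (S : Finset ι) (k : ℕ) :
    ∀ (rest : List (ι → ℝ)) (K : ℝ), k + rest.length = S.card → (∀ b ∈ rest, ∀ i, 0 < b i) →
    (∀ x : ℕ → ℝ, (∀ j, 0 < x j) → K * ∏ j ∈ range k, x j ≤
      colPer (List.replicate k (fun i => ∑ j ∈ range k, x j * a j i) ++ rest) S) →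
    K ≤ (k : ℝ) ^ k * colPer ((List.range k).map a ++ rest) S := by
  induction k with
  | zero =>
    intro rest K _ _ h
    simpa using h (fun _ => 1) (fun _ => one_pos)
  | succ k ih =>
    intro rest K hS hrest h
    rcases Nat.eq_zero_or_pos k with rfl | hk
    · simpa using h (fun _ => 1) (fun _ => one_pos)
    have hk' : (0 : ℝ) < k := by exact_mod_cast hk
    have hrest' : ∀ b ∈ a k :: rest, ∀ i, 0 < b i := by
      intro b hb; simp at hb; rcases hb with rfl | hb
      · exact ha k
      · exact hrest b hb
    have := ih (a k :: rest) (K * (k : ℝ) ^ k / ((k : ℝ) + 1) ^ (k + 1))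
      (by simp; omega) hrest' ?_
    · rw [List.range_succ, List.map_append, List.append_assoc]
      simp only [List.map_cons, List.map_nil, List.cons_append, List.nil_append]
      rw [div_le_iff₀ (by positivity)] at this
      push_cast
      refine le_of_mul_le_mul_right ?_ (show (0 : ℝ) < (k : ℝ) ^ k by positivity)
      linarith
    · intro x hx
      set z : ι → ℝ := fun i => ∑ j ∈ range k, x j * a j i with hzdef
      have hz : ∀ i, 0 < z i := fun i =>
        sum_pos (fun j _ => mul_pos (hx j) (ha j i)) ⟨0, by simpa using hk⟩
      have hf0 : 0 < colPer (List.replicate (k + 1) z ++ rest) S :=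
        colPer_pos _ _ (by simp; omega) (by
          intro b hb
          simp only [List.mem_append, List.mem_replicate] at hb
          rcases hb with ⟨_, rfl⟩ | hb
          · exact hz
          · exact hrest b hb)
      have hf1 : 0 < colPer (List.replicate k z ++ a k :: rest) S :=
        colPer_pos _ _ (by simp; omega) (by
          intro b hb
          rw [List.mem_append, List.mem_replicate] at hb
          rcases hb with ⟨_, rfl⟩ | hb
          · exact hz
          · exact hrest' b hb)
      set f0 := colPer (List.replicate (k + 1) z ++ rest) S with hf0d
      set f1 := colPer (List.replicate k z ++ a k :: rest) S with hf1d
      set t : ℝ := f0 / (f1 * k) with ht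
      have htpos : 0 < t := by positivity
      have h1 := colPer_minkowski k rest S hS hrest z (a k) hz (ha k) t htpos
      have h2 := h (fun j => if j = k then t else x j) (by
        intro j; split_ifs
        · exact htpos
        · exact hx j)
      have e1 : ∏ j ∈ range (k + 1), (if j = k then t else x j) = (∏ j ∈ range k, x j) * t := by
        rw [prod_range_succ, if_pos rfl]
        congr 1
        refine prod_congr rfl fun j hj => if_neg ?_
        have := mem_range.1 hj; omega
      have e2 : (fun i => ∑ j ∈ range (k + 1), (if j = k then t else x j) * a j i)
          = fun i => z i + t * a k i := by
        funext i
        rw [sum_range_succ, if_pos rfl]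
        congr 1
        refine sum_congr rfl fun j hj => ?_
        rw [if_neg]
        have := mem_range.1 hj; omega
      rw [e1, e2] at h2
      have h3 := h2.trans h1
      rw [← hf0d, ← hf1d] at h3
      have e3 : 1 + t * (f1 / f0) = (k + 1) / k := by
        rw [ht]; field_simp
      rw [e3, ht, div_pow] at h3
      rw [div_mul_eq_mul_div, div_le_iff₀ (by positivity)]
      have h4 := mul_le_mul_of_nonneg_right h3 (show 0 ≤ f1 * (k : ℝ) ^ (k + 1) / f0 by positivity)
      have l4 : K * ((∏ j ∈ range k, x j) * (f0 / (f1 * k))) * (f1 * (k : ℝ) ^ (k + 1) / f0)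
        = K * (k : ℝ) ^ k * ∏ j ∈ range k, x j := by
        rw [pow_succ]; field_simp
      have r4 : f0 * (((k : ℝ) + 1) ^ (k + 1) / (k : ℝ) ^ (k + 1)) * (f1 * (k : ℝ) ^ (k + 1) / f0)
        = f1 * ((k : ℝ) + 1) ^ (k + 1) := by
        field_simp
      rw [l4, r4] at h4
      exact h4

lemma colPer_replicate (y : ι → ℝ) (n : ℕ) : ∀ S : Finset ι, S.card = n →
    colPer (List.replicate n y) S = n.factorial * ∏ i ∈ S, y i := by
  induction n with
  | zero => intro S hS; rw [card_eq_zero] at hS; subst hS; simp [colPer]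
  | succ n ih =>
    intro S hS
    rw [List.replicate_succ, colPer_cons]
    calc _ = ∑ i ∈ S, (n.factorial : ℝ) * ∏ i ∈ S, y i := by
          refine sum_congr rfl fun i hi => ?_
          rw [ih _ (by rw [card_erase_of_mem hi, hS]; rfl), ← mul_prod_erase S y hi]; ring
      _ = _ := by
          rw [sum_const, hS, nsmul_eq_mul, Nat.factorial_succ]; push_cast; ring

lemma colPer_continuous (a : ℕ → ι → ℝ) (l : List ℕ) : ∀ S : Finset ι,
    Continuous fun e : ℝ => colPer (l.map fun j i => a j i + e) S := by
  induction l with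
  | nil => intro S; simp only [List.map_nil, colPer]; exact continuous_const
  | cons j l ih =>
    intro S
    simp only [List.map_cons, colPer_cons]
    refine continuous_finsetSum _ fun i _ => ?_
    exact (by fun_prop : Continuous fun e : ℝ => a j i + e).mul (ih _)

/-- The van der Waerden bound. -/
theorem van_der_waerden (n : ℕ) (a : ℕ → ι → ℝ) (S : Finset ι) (hS : S.card = n)
    (ha : ∀ j i, 0 ≤ a j i) (hrow : ∀ i ∈ S, ∑ j ∈ range n, a j i = 1)
    (hcol : ∀ j ∈ range n, ∑ i ∈ S, a j i = 1) :
    (n.factorial : ℝ) ≤ (n : ℝ) ^ n * colPer ((List.range n).map a) S := by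
  have key : ∀ e : ℝ, 0 < e →
      (n.factorial : ℝ) ≤ (n : ℝ) ^ n * colPer ((List.range n).map fun j i => a j i + e) S := by
    intro e he
    have := capacity_ind (fun j i => a j i + e) (fun j i => add_pos_of_nonneg_of_pos (ha j i) he)
      S n [] n.factorial (by simp [hS]) (by simp) ?_
    · simpa using this
    · intro x hx
      rw [List.append_nil, colPer_replicate _ n S hS]
      refine mul_le_mul_of_nonneg_left ?_ (by positivity)
      calc ∏ j ∈ range n, x j = ∏ j ∈ range n, x j ^ (∑ i ∈ S, a j i) := by
            refine prod_congr rfl fun j hj => ?_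
            rw [hcol j hj, Real.rpow_one]
        _ = ∏ j ∈ range n, ∏ i ∈ S, x j ^ (a j i) := by
            refine prod_congr rfl fun j hj => ?_
            rw [Real.rpow_sum_of_pos (hx j)]
        _ = ∏ i ∈ S, ∏ j ∈ range n, x j ^ (a j i) := prod_comm
        _ ≤ _ := by
            refine prod_le_prod (fun i _ => prod_nonneg fun j _ => Real.rpow_nonneg (hx j).le _) ?_
            intro i hi
            refine (Real.geom_mean_le_arith_mean_weighted (range n) (fun j => a j i) x
              (fun j _ => ha j i) (hrow i hi) (fun j _ => (hx j).le)).trans ?_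
            refine sum_le_sum fun j _ => ?_
            nlinarith [hx j, mul_pos (hx j) he]
  have hc : Continuous fun e : ℝ =>
      (n : ℝ) ^ n * colPer ((List.range n).map fun j i => a j i + e) S :=
    continuous_const.mul (colPer_continuous a _ S)
  have ht := (hc.tendsto 0).mono_left (nhdsWithin_le_nhds (s := Set.Ioi 0))
  simp only [add_zero] at ht
  exact ge_of_tendsto ht (by filter_upwards [self_mem_nhdsWithin] with e he using key e he)

lemma colPer_smul (t : ℝ) (a : ℕ → ι → ℝ) (l : List ℕ) : ∀ S : Finset ι,
    colPer (l.map fun j i => t * a j i) S = t ^ l.length * colPer (l.map a) S := by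
  induction l with
  | nil => intro S; simp [colPer]
  | cons j l ih =>
    intro S
    simp only [List.map_cons, colPer_cons, ih, List.length_cons, mul_sum]
    exact sum_congr rfl fun i _ => by ring

lemma colPer_ofFn [Fintype ι] (m : ℕ) : ∀ (a : Fin m → ι → ℝ) (S : Finset ι),
    colPer (List.ofFn a) S = ∑ f : Fin m → ι,
      if Function.Injective f ∧ ∀ j, f j ∈ S then ∏ j, a j (f j) else 0 := by
  classical
  induction m with
  | zero =>
    intro a S
    simp [colPer, Function.injective_of_subsingleton]
  | succ m ih =>
    intro a S
    rw [List.ofFn_succ, colPer_cons, ← (Fin.consEquiv fun _ => ι).sum_comp, Fintype.sum_prod_type,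
      ← sum_filter_add_sum_filter_not univ (fun i => i ∈ S)]
    rw [sum_eq_zero (s := univ.filter fun i => ¬ i ∈ S)]
    · rw [add_zero]
      refine sum_congr (by ext; simp) fun i hi => ?_
      rw [ih, mul_sum]
      have hi : i ∈ S := by simpa using hi
      refine sum_congr rfl fun f _ => ?_
      have e : (Function.Injective (Fin.consEquiv (fun _ => ι) (i, f)) ∧
          ∀ j, Fin.consEquiv (fun _ => ι) (i, f) j ∈ S) ↔
          (Function.Injective f ∧ ∀ j, f j ∈ S.erase i) := by
        simp only [Fin.consEquiv, Equiv.coe_fn_mk, Fin.cons_injective_iff, Fin.forall_fin_succ,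
          Fin.cons_zero, Fin.cons_succ, mem_erase, Set.mem_range, not_exists]
        grind
      rw [if_congr e rfl rfl]
      split_ifs
      · simp [Fin.prod_univ_succ, Fin.consEquiv]
      · simp
    · intro i hi
      refine sum_eq_zero fun f _ => if_neg ?_
      intro h
      have := h.2 0
      simp [Fin.consEquiv] at this hi
      exact hi this
end

section
open Classical in
lemma extension_bound (n r : ℕ) (hr : r < n) (f : Fin r → Fin n → Fin n)
    (hf1 : ∀ i, Function.Injective (f i)) (hf2 : ∀ j, Function.Injective fun i => f i j) :
    (n.factorial : ℝ) * ((n - r : ℕ) : ℝ) ^ n ≤ (n : ℝ) ^ n *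
      ((univ.filter fun σ : Fin n → Fin n =>
        Function.Injective σ ∧ ∀ j i, f i j ≠ σ j).card : ℝ) := by
  have hd : (0 : ℝ) < ((n - r : ℕ) : ℝ) := by exact_mod_cast Nat.sub_pos_of_lt hr
  set d : ℝ := ((n - r : ℕ) : ℝ) with hddef
  let b : ℕ → Fin n → ℝ := fun j s => if h : j < n then
    (if ∀ i, f i ⟨j, h⟩ ≠ s then 1 else 0) else 0
  have hb : ∀ (j s : Fin n), b j s = if ∀ i, f i j ≠ s then 1 else 0 := by
    intro j s; simp [b]
  have hrow : ∀ s, ∑ j ∈ range n, b j s = d := by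
    intro s
    rw [sum_range]
    simp_rw [hb]
    rw [sum_boole, hddef]
    congr 1
    choose g hg using fun i => (Finite.surjective_of_injective (hf1 i)) s
    have : (univ.filter fun j => ∀ i, f i j ≠ s) = (univ.image g)ᶜ := by
      ext j
      simp only [mem_filter, mem_univ, true_and, mem_compl, mem_image, not_exists]
      refine forall_congr' fun i => not_congr ⟨fun h => ?_, fun h => ?_⟩
      · exact hf1 i ((hg i).trans h.symm)
      · rw [← h]; exact hg i
    rw [this, card_compl, card_image_of_injective]
    · simp
    · intro i i' h
      refine hf2 (g i) ?_
      change f i (g i) = f i' (g i)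
      rw [hg i, h, hg i']
  have hcol : ∀ j ∈ range n, ∑ s, b j s = d := by
    intro j hj
    obtain ⟨j, rfl⟩ : ∃ k : Fin n, (k : ℕ) = j := ⟨⟨j, mem_range.1 hj⟩, rfl⟩
    simp_rw [hb]
    rw [sum_boole, hddef]
    congr 1
    have : (univ.filter fun s => ∀ i, f i j ≠ s) = (univ.image fun i => f i j)ᶜ := by
      ext s; simp
    rw [this, card_compl, card_image_of_injective _ (hf2 j)]
    simp
  have hv := van_der_waerden n (fun j s => d⁻¹ * b j s) univ (by simp) (by
      intro j s
      refine mul_nonneg (by positivity) ?_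
      simp only [b]; split_ifs <;> norm_num)
    (fun i _ => by rw [← mul_sum, hrow, inv_mul_cancel₀ hd.ne'])
    (fun j hj => by rw [← mul_sum, hcol j hj, inv_mul_cancel₀ hd.ne'])
  rw [colPer_smul, List.length_range] at hv
  have e : (List.range n).map b = List.ofFn fun j : Fin n => b j := by
    apply List.ext_getElem <;> simp
  have e2 : colPer ((List.range n).map b) univ = ((univ.filter fun σ : Fin n → Fin n =>
        Function.Injective σ ∧ ∀ j i, f i j ≠ σ j).card : ℝ) := by
    rw [e, colPer_ofFn, ← sum_boole]
    refine sum_congr rfl fun σ _ => ?_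
    simp only [hb, mem_univ, implies_true, and_true]
    by_cases h1 : Function.Injective σ
    · simp only [h1, if_true, true_and]
      rw [prod_boole]
      simp
    · simp [h1]
  rw [e2] at hv
  have h3 := mul_le_mul_of_nonneg_right hv (show 0 ≤ d ^ n by positivity)
  refine h3.trans_eq ?_
  rw [inv_pow]; field_simp

open Classical in
/-- Latin rectangles with `r` rows and `n` columns. -/
noncomputable def latinRect (n r : ℕ) : Finset (Fin r → Fin n → Fin n) :=
  univ.filter fun f => (∀ i, Function.Injective (f i)) ∧ ∀ j, Function.Injective fun i => f i j

lemma mem_latinRect {n r : ℕ} {f : Fin r → Fin n → Fin n} : f ∈ latinRect n r ↔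
    (∀ i, Function.Injective (f i)) ∧ ∀ j, Function.Injective fun i => f i j := by
  simp [latinRect]

open Classical in
lemma latinRect_succ (n r : ℕ) : (latinRect n (r + 1)).card = ∑ f ∈ latinRect n r,
    (univ.filter fun σ : Fin n → Fin n => Function.Injective σ ∧ ∀ j i, f i j ≠ σ j).card := by
  rw [← card_sigma]
  symm
  refine card_bij' (fun p _ => Fin.cons p.2 p.1) (fun F _ => ⟨Fin.tail F, F 0⟩) ?_ ?_ ?_ ?_
  · rintro ⟨f, σ⟩ h
    simp only [mem_sigma, mem_latinRect, mem_filter, mem_univ, true_and] at h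
    rw [mem_latinRect]
    obtain ⟨⟨h1, h2⟩, h3, h4⟩ := h
    refine ⟨?_, ?_⟩
    · intro i
      refine Fin.cases ?_ (fun i => ?_) i
      · simpa using h3
      · simpa using h1 i
    · intro j
      have : (fun i => (Fin.cons σ f : Fin (r + 1) → Fin n → Fin n) i j)
          = Fin.cons (σ j) (fun i => f i j) := by
        funext i
        refine Fin.cases ?_ (fun i => ?_) i <;> simp
      rw [this, Fin.cons_injective_iff]
      refine ⟨?_, h2 j⟩
      rintro ⟨i, hi⟩
      exact h4 j i hi
  · intro F hF
    rw [mem_latinRect] at hF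
    simp only [mem_sigma, mem_latinRect, mem_filter, mem_univ, true_and]
    refine ⟨⟨fun i => hF.1 i.succ, fun j i i' h => Fin.succ_injective _ (hF.2 j h)⟩, hF.1 0, ?_⟩
    intro j i h
    exact Fin.succ_ne_zero i (hF.2 j h)
  · rintro ⟨f, σ⟩ h
    simp
  · intro F hF
    simp

lemma latinRect_bound (n r : ℕ) (hr : r ≤ n) :
    (n.factorial : ℝ) ^ r * ∏ k ∈ range r, ((n - k : ℕ) : ℝ) ^ n
      ≤ ((n : ℝ) ^ n) ^ r * ((latinRect n r).card : ℝ) := by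
  classical
  induction r with
  | zero =>
    have : (latinRect n 0).card = 1 := by
      rw [card_eq_one]
      refine ⟨fun i => i.elim0, ?_⟩
      ext f
      rw [mem_latinRect, mem_singleton]
      refine ⟨fun _ => Subsingleton.elim _ _, fun _ => ⟨fun i => i.elim0, fun j i => i.elim0⟩⟩
    simp [this]
  | succ r ih =>
    have h1 := ih (by omega)
    rw [latinRect_succ, prod_range_succ]
    push_cast
    have h2 : ((latinRect n r).card : ℝ) * ((n.factorial : ℝ) * ((n - r : ℕ) : ℝ) ^ n) ≤
        (n : ℝ) ^ n * ∑ f ∈ latinRect n r, ((univ.filter fun σ : Fin n → Fin n =>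
          Function.Injective σ ∧ ∀ j i, f i j ≠ σ j).card : ℝ) := by
      rw [← nsmul_eq_mul, ← sum_const, mul_sum]
      refine sum_le_sum fun f hf => ?_
      rw [mem_latinRect] at hf
      exact extension_bound n r (by omega) f hf.1 hf.2
    calc _ = ((n.factorial : ℝ) ^ r * ∏ k ∈ range r, ((n - k : ℕ) : ℝ) ^ n) *
          ((n.factorial : ℝ) * ((n - r : ℕ) : ℝ) ^ n) := by ring
      _ ≤ (((n : ℝ) ^ n) ^ r * ((latinRect n r).card : ℝ)) *
          ((n.factorial : ℝ) * ((n - r : ℕ) : ℝ) ^ n) := by gcongr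
      _ = ((n : ℝ) ^ n) ^ r * (((latinRect n r).card : ℝ) *
          ((n.factorial : ℝ) * ((n - r : ℕ) : ℝ) ^ n)) := by ring
      _ ≤ _ := mul_le_mul_of_nonneg_left h2 (by positivity)
      _ = _ := by rw [← mul_assoc, ← pow_succ]
end

/-- for every n ≥ 1, L(n) ≥ (n!)^{2n} / n^{n²}. -/
theorem latin_square_count_lower_bound (n : ℕ) (hn : 1 ≤ n) :
    ((n.factorial : ℝ)) ^ (2 * n) / (n : ℝ) ^ (n ^ 2) ≤ (latinSquareCount n : ℝ) := by
  have hcard : latinSquareCount n = (latinRect n n).card := by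
    unfold latinSquareCount
    rw [← Nat.card_eq_finsetCard]
    refine Nat.card_congr (Equiv.subtypeEquivRight fun L => ?_)
    rw [mem_latinRect]
    simp only [← Finite.injective_iff_bijective]
  have h := latinRect_bound n n le_rfl
  have hp : ∏ k ∈ range n, ((n - k : ℕ) : ℝ) ^ n = (n.factorial : ℝ) ^ n := by
    rw [prod_pow]
    congr 1
    rw [← prod_range_reflect, ← prod_range_add_one_eq_factorial]
    push_cast
    refine prod_congr rfl fun k hk => ?_
    have := mem_range.1 hk
    rw [show n - (n - 1 - k) = k + 1 by omega]
    push_cast; rfl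
  have hn' : (0 : ℝ) < n := by exact_mod_cast hn
  rw [hp, ← pow_mul, ← pow_add, ← hcard] at h
  rw [div_le_iff₀ (by positivity), two_mul, sq, mul_comm (latinSquareCount n : ℝ)]
  exact h
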